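/- Let p be a prime, ℤ_(p) the localization of ℤ at the prime ideal (p), and V := ℤ_(p)[u₁, u₂, u₃, …] a polynomial ring on countably many generators; set u₀ := p, and for r ≥ 0 let V_r := ℤ_(p)[u₁, …, u_r] ⊆ V. Define V-modules M_n recursively by M₀ := V and M_{n+1} := the cokernel of the localization map λ_n : M_n → M_n[u_n⁻¹] (localization of the module M_n inverting u_n). Then: (a) for every n ≥ 0 the map λ_n is injective (so that M_n is the module usually written V/(u₀^∞, …, u_{n−1}^∞)); and (b) whenever n > r, the map λ_n is a split injection of V_r-modules, i.e. admits a V_r-linear retraction. (These are the key local computations underlying the algebraic chromatic convergence theorem.) -/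

import Mathlib

noncomputable section

/-- `ℤ_(p)`: the localization of `ℤ` at the prime ideal `(p)`. -/
abbrev Zloc (p : ℕ) (hp : p.Prime) : Type :=
  @Localization.AtPrime ℤ _ (Ideal.span {(p : ℤ)})
    ((Ideal.span_singleton_prime (by exact_mod_cast hp.ne_zero)).mpr
      (Int.prime_iff_natAbs_prime.mpr (by simpa using hp)))

/-- The polynomial ring `V = ℤ_(p)[u₁, u₂, u₃, …]`, where `uᵢ := X (i - 1)`. -/
abbrev Vring (p : ℕ) (hp : p.Prime) : Type := MvPolynomial ℕ (Zloc p hp)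

/-- The sequence `u₀ := p`, `u_k := X (k-1)` (representing `u_k`) for `k ≥ 1`. -/
def uElt (p : ℕ) (hp : p.Prime) : ℕ → Vring p hp :=
  fun n => if n = 0 then (p : Vring p hp) else MvPolynomial.X (n - 1)

/-- The subring `V_r = ℤ_(p)[u₁, …, u_r] ⊆ V`. -/
def VrSub (p : ℕ) (hp : p.Prime) (r : ℕ) : Subalgebra (Zloc p hp) (Vring p hp) :=
  Algebra.adjoin _ {x | ∃ i < r, x = MvPolynomial.X i}

/-- The tower of `V`-modules `M₀ := V` and
`M_{n+1} := coker (M_n → M_n[u_n⁻¹])`, so that `M_n = V/(u₀^∞, …, u_{n-1}^∞)`. -/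
def Mmod (p : ℕ) (hp : p.Prime) : ℕ → ModuleCat (Vring p hp)
  | 0 => ModuleCat.of (Vring p hp) (Vring p hp)
  | n + 1 =>
    ModuleCat.of (Vring p hp)
      ((LocalizedModule (Submonoid.powers (uElt p hp n)) (Mmod p hp n)) ⧸
        LinearMap.range
          (LocalizedModule.mkLinearMap (Submonoid.powers (uElt p hp n)) (Mmod p hp n)))

section DivisionOperators

variable {R : Type*} [CommRing R] {M : Type*} [AddCommGroup M] [Module R M]

/-- An additive left inverse of multiplication by `u` on `M` that commutes with the action of
every element of `A`. -/
def HasDivision (M : Type*) [AddCommGroup M] [Module R M] (u : R) (A : Set R) : Prop :=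
  ∃ d : AddMonoid.End M, (∀ x, d (u • x) = x) ∧ ∀ c ∈ A, ∀ x, d (c • x) = c • d x

theorem AddMonoid.End.pow_apply_pow_smul {u : R} {d : AddMonoid.End M}
    (hd : ∀ x, d (u • x) = x) (a : ℕ) (x : M) : (d ^ a) (u ^ a • x) = x := by
  induction a generalizing x with
  | zero => simp
  | succ a ih =>
    rw [pow_succ' u, mul_smul, pow_succ d, AddMonoid.End.coe_mul, Function.comp_apply, hd, ih]

theorem AddMonoid.End.pow_apply_smul {c : R} {d : AddMonoid.End M}
    (hd : ∀ x, d (c • x) = c • d x) (a : ℕ) (x : M) : (d ^ a) (c • x) = c • (d ^ a) x := by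
  induction a generalizing x with
  | zero => simp
  | succ a ih => rw [pow_succ d, AddMonoid.End.coe_mul, Function.comp_apply, hd, ih, Function.comp_apply]

theorem AddMonoid.End.pow_apply_eq_of_pow_smul_eq {u : R} {d : AddMonoid.End M}
    (hd : ∀ x, d (u • x) = x) {a b : ℕ} {x y : M} (h : u ^ b • x = u ^ a • y) :
    (d ^ a) x = (d ^ b) y := by
  rw [← pow_apply_pow_smul hd b x, h, ← Function.comp_apply (f := d ^ a),
    ← AddMonoid.End.coe_mul, ← pow_add, add_comm, pow_add, AddMonoid.End.coe_mul, Function.comp_apply, pow_apply_pow_smul hd]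

theorem LocalizedModule.mkLinearMap_powers_injective {u : R}
    (hu : ∀ x y : M, u • x = u • y → x = y) :
    Function.Injective (mkLinearMap (Submonoid.powers u) M) := by
  intro x y h
  simp only [mkLinearMap_apply, mk_eq] at h
  obtain ⟨⟨_, a, rfl⟩, h⟩ := h
  simp only [one_smul, Submonoid.smul_def] at h
  induction a with
  | zero => simpa using h
  | succ a ih =>
    simp only [pow_succ', mul_smul] at h
    exact ih (hu _ _ h)

theorem HasDivision.smul_injective {u : R} {A : Set R} (h : HasDivision M u A) (x y : M)
    (hxy : u • x = u • y) : x = y := by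
  obtain ⟨d, hd, -⟩ := h
  rw [← hd x, hxy, hd]

/-- The retraction of the localization map sending `m / u ^ a` to `d ^ a` applied to `m`. -/
theorem HasDivision.exists_retraction {u : R} {A : Set R} (h : HasDivision M u A) :
    ∃ ρ : LocalizedModule (Submonoid.powers u) M →+ M,
      (∀ c ∈ A, ∀ x, ρ (c • x) = c • ρ x) ∧
      ∀ x, ρ (LocalizedModule.mkLinearMap (Submonoid.powers u) M x) = x := by
  obtain ⟨d, hd, hA⟩ := h
  choose e he using fun t : Submonoid.powers u => t.2
  have key (x y : M) (s t : Submonoid.powers u) (a b : ℕ) (hs : u ^ a = s) (ht : u ^ b = t)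
      (hxy : LocalizedModule.mk x s = LocalizedModule.mk y t) : (d ^ a) x = (d ^ b) y := by
    rw [LocalizedModule.mk_eq] at hxy
    obtain ⟨⟨_, c, rfl⟩, hc⟩ := hxy
    simp only [Submonoid.smul_def, ← hs, ← ht] at hc
    apply AddMonoid.End.pow_apply_eq_of_pow_smul_eq hd
    simpa only [AddMonoid.End.pow_apply_pow_smul hd] using congrArg (d ^ c) hc
  let f : LocalizedModule (Submonoid.powers u) M → M := fun z =>
    z.liftOn (fun q => (d ^ e q.2) q.1) fun q q' hq =>
      key _ _ q.2 q'.2 _ _ (he _) (he _) (LocalizedModule.mk_eq.mpr hq)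
  have hf (x : M) (t : Submonoid.powers u) (a : ℕ) (ht : u ^ a = t) :
      f (LocalizedModule.mk x t) = (d ^ a) x := key _ _ t t _ _ (he _) ht rfl
  refine ⟨AddMonoidHom.mk' f fun y z => ?_, fun c hc z => ?_, fun x => ?_⟩
  · induction y using LocalizedModule.induction_on with | _ y s
    induction z using LocalizedModule.induction_on with | _ z t
    rw [LocalizedModule.mk_add_mk, hf _ _ (e s + e t) (by simp [pow_add, he]), hf _ _ _ (he s),
      hf _ _ _ (he t), map_add, Submonoid.smul_def, Submonoid.smul_def, ← he, ← he]
    congr 1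
    · rw [pow_add, AddMonoid.End.coe_mul, Function.comp_apply,
        AddMonoid.End.pow_apply_pow_smul hd]
    · rw [add_comm, pow_add, AddMonoid.End.coe_mul, Function.comp_apply,
        AddMonoid.End.pow_apply_pow_smul hd]
  · induction z using LocalizedModule.induction_on with | _ z t
    simp only [AddMonoidHom.mk'_apply]
    rw [LocalizedModule.smul'_mk, hf _ _ _ (he t), hf _ _ _ (he t),
      AddMonoid.End.pow_apply_smul (hA c hc)]
  · simpa using hf x 1 0 (by simp)

theorem HasDivision.localizedModule {u v : R} {A : Set R} (h : HasDivision M u A) (hv : v ∈ A) :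
    ∃ d : AddMonoid.End (LocalizedModule (Submonoid.powers v) M),
      (∀ x, d (u • x) = x) ∧ (∀ c ∈ A, ∀ x, d (c • x) = c • d x) ∧
      ∀ x ∈ LinearMap.range (LocalizedModule.mkLinearMap (Submonoid.powers v) M),
        d x ∈ LinearMap.range (LocalizedModule.mkLinearMap (Submonoid.powers v) M) := by
  obtain ⟨d, hd, hA⟩ := h
  have hpow (t : Submonoid.powers v) (x : M) : d (t • x) = t • d x := by
    obtain ⟨_, a, rfl⟩ := t
    simp only [Submonoid.smul_def]
    induction a generalizing x with
    | zero => simp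
    | succ a ih => simp only [pow_succ', mul_smul, hA v hv, ih]
  let f : LocalizedModule (Submonoid.powers v) M → LocalizedModule (Submonoid.powers v) M :=
    fun z => z.liftOn (fun q => LocalizedModule.mk (d q.1) q.2) fun q q' hq => by
      obtain ⟨c, hc⟩ := hq
      refine LocalizedModule.mk_eq.mpr ⟨c, ?_⟩
      simpa only [hpow] using congrArg d hc
  have hf (x : M) (t : Submonoid.powers v) :
      f (LocalizedModule.mk x t) = LocalizedModule.mk (d x) t := rfl
  refine ⟨AddMonoidHom.mk' f fun y z => ?_, fun z => ?_, fun c hc z => ?_, ?_⟩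
  · induction y using LocalizedModule.induction_on with | _ y s
    induction z using LocalizedModule.induction_on with | _ z t
    simp only [LocalizedModule.mk_add_mk, hf, map_add, hpow]
  · induction z using LocalizedModule.induction_on with | _ z t
    exact (congrArg f (LocalizedModule.smul'_mk u z t)).trans (by rw [hf, hd])
  · induction z using LocalizedModule.induction_on with | _ z t
    exact (congrArg f (LocalizedModule.smul'_mk c z t)).trans
      (by rw [hf, hA c hc, ← LocalizedModule.smul'_mk]; rfl)
  · rintro _ ⟨x, rfl⟩
    exact ⟨d x, rfl⟩

theorem HasDivision.quotient_range {u v : R} {A : Set R} (h : HasDivision M u A) (hv : v ∈ A) :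
    HasDivision (LocalizedModule (Submonoid.powers v) M ⧸
      LinearMap.range (LocalizedModule.mkLinearMap (Submonoid.powers v) M)) u A := by
  obtain ⟨d, hd, hA, hr⟩ := h.localizedModule hv
  refine ⟨QuotientAddGroup.map (Submodule.toAddSubgroup _) (Submodule.toAddSubgroup _) d hr,
    fun x => ?_, fun c hc x => ?_⟩
  · obtain ⟨x, rfl⟩ := Submodule.Quotient.mk_surjective _ x
    exact congrArg Submodule.Quotient.mk (hd x)
  · obtain ⟨x, rfl⟩ := Submodule.Quotient.mk_surjective _ x
    exact congrArg Submodule.Quotient.mk (hA c hc x)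

end DivisionOperators

theorem MvPolynomial.hasDivision_X {σ S : Type*} [CommRing S] (k : σ) :
    HasDivision (MvPolynomial σ S) (X k : MvPolynomial σ S)
      (Algebra.adjoin S {x : MvPolynomial σ S | ∃ j ≠ k, x = X j}) := by
  classical
  refine ⟨AddMonoidHom.mk' (fun f => f.divMonomial (Finsupp.single k 1))
    fun f g => add_divMonomial f g _, fun f => X_mul_divMonomial k f, fun c hc => ?_⟩
  change ∀ f : MvPolynomial σ S, (c * f).divMonomial (Finsupp.single k 1) =
    c * f.divMonomial (Finsupp.single k 1)
  induction hc using Algebra.adjoin_induction with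
  | mem c hc =>
    obtain ⟨j, hj, rfl⟩ := hc
    intro f
    ext m
    have hsub : Finsupp.single k 1 + m - Finsupp.single j 1 =
        Finsupp.single k 1 + (m - Finsupp.single j 1) := by
      ext i
      by_cases hi : j = i
      · subst hi
        simp [hj.symm]
      · simp [Finsupp.single_apply, hi]
    simp [coeff_divMonomial, coeff_X_mul', hsub, hj.symm]
  | algebraMap r =>
    intro f
    ext m
    simp [coeff_divMonomial, MvPolynomial.algebraMap_eq, coeff_C_mul]
  | add c c' _ _ h h' => intro f; simp only [add_mul, add_divMonomial, h, h']
  | mul c c' _ _ h h' => intro f; rw [mul_assoc, h, h', mul_assoc]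

theorem uElt_mem_adjoin (p : ℕ) (hp : p.Prime) {n k : ℕ} (hn : n ≤ k) :
    uElt p hp n ∈ Algebra.adjoin (Zloc p hp)
      {x : Vring p hp | ∃ j ≠ k, x = MvPolynomial.X j} := by
  unfold uElt
  split_ifs with h
  · exact natCast_mem _ p
  · exact Algebra.subset_adjoin ⟨n - 1, by omega, rfl⟩

theorem Mmod_hasDivision (p : ℕ) (hp : p.Prime) (n k : ℕ) (hn : n ≤ k + 1) :
    HasDivision (Mmod p hp n) (uElt p hp (k + 1))
      (Algebra.adjoin (Zloc p hp) {x : Vring p hp | ∃ j ≠ k, x = MvPolynomial.X j}) := by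
  induction n with
  | zero => exact MvPolynomial.hasDivision_X k
  | succ n ih => exact (ih (by omega)).quotient_range (uElt_mem_adjoin p hp (by omega))

theorem VrSub_le_adjoin (p : ℕ) (hp : p.Prime) {r k : ℕ} (hr : r ≤ k) :
    VrSub p hp r ≤ Algebra.adjoin (Zloc p hp)
      {x : Vring p hp | ∃ j ≠ k, x = MvPolynomial.X j} := by
  apply Algebra.adjoin_mono
  rintro _ ⟨i, hi, rfl⟩
  exact ⟨i, by omega, rfl⟩

theorem span_natCast_isPrime (p : ℕ) (hp : p.Prime) : (Ideal.span {(p : ℤ)}).IsPrime :=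
  (Ideal.span_singleton_prime (by exact_mod_cast hp.ne_zero)).mpr (Nat.prime_iff_prime_int.mp hp)

theorem Zloc_isDomain (p : ℕ) (hp : p.Prime) : IsDomain (Zloc p hp) :=
  have := span_natCast_isPrime p hp
  IsLocalization.isDomain_localization (Ideal.primeCompl_le_nonZeroDivisors _)

theorem Zloc_charZero (p : ℕ) (hp : p.Prime) : CharZero (Zloc p hp) :=
  have := span_natCast_isPrime p hp
  charZero_of_injective_algebraMap (R := ℤ)
    (IsLocalization.injective _ (Ideal.primeCompl_le_nonZeroDivisors (Ideal.span {(p : ℤ)})))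

theorem uElt_zero_mul_injective (p : ℕ) (hp : p.Prime) (x y : Vring p hp)
    (h : uElt p hp 0 * x = uElt p hp 0 * y) : x = y := by
  have := Zloc_isDomain p hp
  have := Zloc_charZero p hp
  have hu : uElt p hp 0 = (p : Vring p hp) := if_pos rfl
  rw [hu] at h
  exact mul_left_cancel₀ (Nat.cast_ne_zero.mpr hp.ne_zero) h

/-- The key local computations underlying algebraic chromatic convergence:
(a) each localization map `λ_n : M_n → M_n[u_n⁻¹]` is injective, and
(b) for `n > r` it is a split injection of `V_r`-modules, i.e. admits a
`V_r`-linear retraction. -/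
theorem chromatic_convergence_local_computations (p : ℕ) (hp : p.Prime) :
    (∀ n : ℕ, Function.Injective
      (LocalizedModule.mkLinearMap (Submonoid.powers (uElt p hp n)) (Mmod p hp n))) ∧
    ∀ r n : ℕ, r < n →
      ∃ ρ : LocalizedModule (Submonoid.powers (uElt p hp n)) (Mmod p hp n) →+
          Mmod p hp n,
        (∀ c : Vring p hp, c ∈ VrSub p hp r →
          ∀ x, ρ (c • x) = c • ρ x) ∧
        ∀ x, ρ (LocalizedModule.mkLinearMap
          (Submonoid.powers (uElt p hp n)) (Mmod p hp n) x) = x := by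
  refine ⟨fun n => ?_, fun r n hrn => ?_⟩
  · apply LocalizedModule.mkLinearMap_powers_injective
    cases n with
    | zero => exact uElt_zero_mul_injective p hp
    | succ k => exact (Mmod_hasDivision p hp (k + 1) k le_rfl).smul_injective
  · obtain ⟨k, rfl⟩ := Nat.exists_eq_add_one_of_ne_zero (Nat.ne_zero_of_lt hrn)
    obtain ⟨ρ, hρ, hρ'⟩ := (Mmod_hasDivision p hp (k + 1) k le_rfl).exists_retraction
    exact ⟨ρ, fun c hc => hρ c (VrSub_le_adjoin p hp (Nat.le_of_lt_succ hrn) hc), hρ'⟩
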